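/- The geodesic vector field X_E has vanishing divergence at every point of 𝔤 (i.e. the trace of the Fréchet derivative of X_E is zero everywhere) if and only if 𝔤 is unimodular, i.e. Tr(ad_u) = 0 for every u ∈ 𝔤. -/

import Mathlib

open scoped InnerProductSpace

/-!
The field `X a = -D a a` is quadratic, so its derivative at `a` is `h ↦ -(D a h + D h a)` and its
divergence is `-(tr (D a) + tr (h ↦ D h a))`. The Koszul formula says that `D a` is skew-symmetric,
so the first trace vanishes, and that `D h a = D a h - [a, h]`, so the second one is `-tr (ad a)`.
Hence `X` has divergence `tr (ad a)` at each point `a`.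
-/

section Divergence

variable {𝕜 E F : Type*} [NontriviallyNormedField 𝕜]
  [NormedAddCommGroup E] [NormedSpace 𝕜 E] [NormedAddCommGroup F] [NormedSpace 𝕜 F]

variable (𝕜) in
/-- The divergence of a vector field on a normed space, as the trace of its Fréchet derivative.
It is `0` by convention at points where the field is not differentiable, and everywhere if the space
is infinite-dimensional. -/
noncomputable def divergence (X : E → E) (a : E) : 𝕜 :=
  LinearMap.trace 𝕜 E (fderiv 𝕜 X a).toLinearMap

variable [CompleteSpace 𝕜] [FiniteDimensional 𝕜 E]

theorem hasFDerivAt_bilinear_diag (B : E →ₗ[𝕜] E →ₗ[𝕜] F) (a : E) :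
    HasFDerivAt (fun x => B x x) (B a + B.flip a).toContinuousLinearMap a := by
  let B' : E →L[𝕜] E →L[𝕜] F := B.toContinuousBilinearMap
  have hB' : HasFDerivAt (fun x => B' x x) _ a :=
    B'.hasFDerivAt.clm_apply (hasFDerivAt_id a)
  exact hB'.congr_fderiv (by ext h; simp [B'])

theorem divergence_bilinear_diag (B : E →ₗ[𝕜] E →ₗ[𝕜] E) (a : E) :
    divergence 𝕜 (fun x => B x x) a =
      LinearMap.trace 𝕜 E (B a) + LinearMap.trace 𝕜 E (B.flip a) := by
  rw [divergence, (hasFDerivAt_bilinear_diag B a).fderiv, LinearMap.coe_toContinuousLinearMap,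
    map_add]

end Divergence

theorem trace_eq_zero_of_forall_inner_self_map_eq_zero {𝕜 E : Type*} [RCLike 𝕜]
    [NormedAddCommGroup E] [InnerProductSpace 𝕜 E] [FiniteDimensional 𝕜 E]
    {T : E →ₗ[𝕜] E} (hT : ∀ x, ⟪x, T x⟫_𝕜 = 0) :
    LinearMap.trace 𝕜 E T = 0 := by
  rw [T.trace_eq_sum_inner (stdOrthonormalBasis 𝕜 E)]
  exact Finset.sum_eq_zero fun i _ => hT _

section LeviCivita

variable {G : Type*} [NormedAddCommGroup G] [InnerProductSpace ℝ G]
  {lie D : G →ₗ[ℝ] G →ₗ[ℝ] G}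

/-- `D` is the Levi-Civita product of the bracket `lie`, as characterised by the Koszul formula. -/
def IsLeviCivitaProduct (lie D : G →ₗ[ℝ] G →ₗ[ℝ] G) : Prop :=
  ∀ u v w : G, 2 * ⟪D u v, w⟫_ℝ = ⟪lie u v, w⟫_ℝ + ⟪lie w u, v⟫_ℝ + ⟪lie w v, u⟫_ℝ

/-- The geodesic vector field `X_E` of the product `D`. -/
def geodesicField (D : G →ₗ[ℝ] G →ₗ[ℝ] G) (a : G) : G :=
  -(D a a)

namespace IsLeviCivitaProduct

theorem inner_self_map (hD : IsLeviCivitaProduct lie D) (hlie : lie.IsAlt) (u v : G) :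
    ⟪v, D u v⟫_ℝ = 0 := by
  have koszul := hD u v v
  rw [hlie.self_eq_zero v, inner_zero_left, ← hlie.neg u v, inner_neg_left] at koszul
  rw [real_inner_comm]
  linarith

theorem sub_swap (hD : IsLeviCivitaProduct lie D) (hlie : lie.IsAlt) (u v : G) :
    D u v - D v u = lie u v := by
  refine ext_inner_right ℝ fun w => ?_
  have koszul_uv := hD u v w
  have koszul_vu := hD v u w
  rw [← hlie.neg u v, inner_neg_left] at koszul_vu
  rw [inner_sub_left]
  linarith

variable [FiniteDimensional ℝ G]

theorem trace_eq_zero (hD : IsLeviCivitaProduct lie D) (hlie : lie.IsAlt) (u : G) :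
    LinearMap.trace ℝ G (D u) = 0 :=
  trace_eq_zero_of_forall_inner_self_map_eq_zero (hD.inner_self_map hlie u)

theorem trace_flip (hD : IsLeviCivitaProduct lie D) (hlie : lie.IsAlt) (u : G) :
    LinearMap.trace ℝ G (D.flip u) = -LinearMap.trace ℝ G (lie u) := by
  have torsion_free : D.flip u = D u - lie u := by
    ext v
    simp [← hD.sub_swap hlie u v]
  rw [torsion_free, map_sub, hD.trace_eq_zero hlie, zero_sub]

theorem divergence_geodesicField (hD : IsLeviCivitaProduct lie D) (hlie : lie.IsAlt) (a : G) :
    divergence ℝ (geodesicField D) a = LinearMap.trace ℝ G (lie a) :=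
  calc
    divergence ℝ (geodesicField D) a
      = LinearMap.trace ℝ G ((-D) a) + LinearMap.trace ℝ G ((-D).flip a) :=
        divergence_bilinear_diag (-D) a
    _ = -(LinearMap.trace ℝ G (D a) + LinearMap.trace ℝ G (D.flip a)) := by
        have flip_neg : (-D).flip a = -D.flip a := rfl
        rw [LinearMap.neg_apply, flip_neg, map_neg, map_neg, neg_add]
    _ = LinearMap.trace ℝ G (lie a) := by
        rw [hD.trace_eq_zero hlie, hD.trace_flip hlie, zero_add, neg_neg]

end IsLeviCivitaProduct

theorem divergence_free_iff_unimodular_general [FiniteDimensional ℝ G]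
    (hlie : lie.IsAlt) (hD : IsLeviCivitaProduct lie D) :
    (∀ a, divergence ℝ (geodesicField D) a = 0) ↔ ∀ u, LinearMap.trace ℝ G (lie u) = 0 :=
  forall_congr' fun a => by rw [hD.divergence_geodesicField hlie a]

end LeviCivita

/-- The geodesic vector field `X_E a = -D a a` has vanishing divergence at
every point of `𝔤` (the trace of its Fréchet derivative is zero everywhere) if and only if
`𝔤` is unimodular, i.e. `Tr(ad u) = 0` for every `u ∈ 𝔤`. -/
theorem divergence_free_iff_unimodular
    {G : Type*} [NormedAddCommGroup G] [InnerProductSpace ℝ G] [FiniteDimensional ℝ G]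
    (lie : G →ₗ[ℝ] G →ₗ[ℝ] G)
    (hanti : ∀ u : G, lie u u = 0)
    (hjac : ∀ u v w : G, lie u (lie v w) = lie (lie u v) w + lie v (lie u w))
    (D : G →ₗ[ℝ] G →ₗ[ℝ] G)
    (hD : ∀ u v w : G,
      2 * ⟪D u v, w⟫_ℝ = ⟪lie u v, w⟫_ℝ + ⟪lie w u, v⟫_ℝ + ⟪lie w v, u⟫_ℝ) :
    (∀ a : G,
        LinearMap.trace ℝ G (fderiv ℝ (fun x : G => -(D x x)) a).toLinearMap = 0) ↔
      (∀ u : G, LinearMap.trace ℝ G (lie u) = 0) :=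
  divergence_free_iff_unimodular_general hanti hD
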